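/- Let p be an odd prime, n ≥ 1, and let R be a commutative ring with p·R = 0 and a distinguished element h ∈ R such that R is h-separable and R is h-adically complete (complete and separated with respect to the (h)-adic topology). Then every R-algebra automorphism φ of the Rees reduced Weyl algebra A(R) satisfying φ(a) ≡ a (mod h·A(R)) for all a ∈ A(R) is equal to conjugation by a unit of A(R). -/

import Mathlib

noncomputable section

/-- The defining relations of the Rees reduced Weyl algebra `A(R)` (with parameter `h ∈ R`):
the `x_i` (indexed by `Sum.inl i`) commute, the `y_j` (indexed by `Sum.inr j`) commute,
`y_j x_i = x_i y_j + δ_{ij}·h`, and `x_i^p = y_j^p = 0`. -/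
inductive ReesWeylRel (p n : ℕ) (R : Type) [CommRing R] (h : R) :
    FreeAlgebra R (Fin n ⊕ Fin n) → FreeAlgebra R (Fin n ⊕ Fin n) → Prop
  | xx (i j : Fin n) :
      ReesWeylRel p n R h (FreeAlgebra.ι R (Sum.inl i) * FreeAlgebra.ι R (Sum.inl j))
        (FreeAlgebra.ι R (Sum.inl j) * FreeAlgebra.ι R (Sum.inl i))
  | yy (i j : Fin n) :
      ReesWeylRel p n R h (FreeAlgebra.ι R (Sum.inr i) * FreeAlgebra.ι R (Sum.inr j))
        (FreeAlgebra.ι R (Sum.inr j) * FreeAlgebra.ι R (Sum.inr i))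
  | yx (i j : Fin n) :
      ReesWeylRel p n R h (FreeAlgebra.ι R (Sum.inr j) * FreeAlgebra.ι R (Sum.inl i))
        (FreeAlgebra.ι R (Sum.inl i) * FreeAlgebra.ι R (Sum.inr j) +
          if i = j then algebraMap R (FreeAlgebra R (Fin n ⊕ Fin n)) h else 0)
  | xp (i : Fin n) : ReesWeylRel p n R h (FreeAlgebra.ι R (Sum.inl i) ^ p) 0
  | yp (j : Fin n) : ReesWeylRel p n R h (FreeAlgebra.ι R (Sum.inr j) ^ p) 0

/-- The Rees reduced Weyl algebra `A(R)` on `2n` generators with parameter `h ∈ R`. -/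
abbrev ReesWeyl (p n : ℕ) (R : Type) [CommRing R] (h : R) : Type :=
  RingQuot (ReesWeylRel p n R h)

/-- The generator `x_i` of the Rees reduced Weyl algebra. -/
def reesX (p n : ℕ) (R : Type) [CommRing R] (h : R) (i : Fin n) : ReesWeyl p n R h :=
  RingQuot.mkAlgHom R (ReesWeylRel p n R h) (FreeAlgebra.ι R (Sum.inl i))

/-- The generator `y_j` of the Rees reduced Weyl algebra. -/
def reesY (p n : ℕ) (R : Type) [CommRing R] (h : R) (j : Fin n) : ReesWeyl p n R h :=
  RingQuot.mkAlgHom R (ReesWeylRel p n R h) (FreeAlgebra.ι R (Sum.inr j))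

theorem rees_commuting_lift {R A ι : Type} [CommRing R] [Ring A] [Algebra R A] (w : ι → A)
    (hw : ∀ i j, w i * w j = w j * w i) :
    ∃ f : MvPolynomial ι R →ₐ[R] A, ∀ i, f (MvPolynomial.X i) = w i := by
  let _ : CommRing (Algebra.adjoin R (Set.range w)) :=
    Algebra.adjoinCommRingOfComm R (by rintro _ ⟨i, rfl⟩ _ ⟨j, rfl⟩; exact hw i j)
  let g : MvPolynomial ι R →ₐ[R] Algebra.adjoin R (Set.range w) :=
    MvPolynomial.aeval (fun i => ⟨w i, Algebra.subset_adjoin ⟨i, rfl⟩⟩)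
  refine ⟨(Algebra.adjoin R (Set.range w)).val.comp g, fun i => ?_⟩
  simp [g]

section
variable {p n : ℕ} {R : Type} [CommRing R] {h : R}

/-- The generators. -/
def reesW (p n : ℕ) (R : Type) [CommRing R] (h : R) (j : Fin n ⊕ Fin n) : ReesWeyl p n R h :=
  RingQuot.mkAlgHom R (ReesWeylRel p n R h) (FreeAlgebra.ι R j)

/-- commutator constants -/
def reesSig (j : Fin n ⊕ Fin n) : ℤ := Sum.elim (fun _ => -1) (fun _ => 1) j

theorem rees_xx (i j : Fin n) : reesW p n R h (.inl i) * reesW p n R h (.inl j) =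
    reesW p n R h (.inl j) * reesW p n R h (.inl i) := by
  simpa [reesW] using RingQuot.mkAlgHom_rel R (ReesWeylRel.xx (p := p) (R := R) (h := h) i j)

theorem rees_yy (i j : Fin n) : reesW p n R h (.inr i) * reesW p n R h (.inr j) =
    reesW p n R h (.inr j) * reesW p n R h (.inr i) := by
  simpa [reesW] using RingQuot.mkAlgHom_rel R (ReesWeylRel.yy (p := p) (R := R) (h := h) i j)

theorem rees_yx (i j : Fin n) : reesW p n R h (.inr j) * reesW p n R h (.inl i) =
    reesW p n R h (.inl i) * reesW p n R h (.inr j) +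
      if i = j then algebraMap R _ h else 0 := by
  have := RingQuot.mkAlgHom_rel R (ReesWeylRel.yx (p := p) (R := R) (h := h) i j)
  split_ifs at this ⊢ <;> simpa [reesW] using this

theorem rees_wp (j : Fin n ⊕ Fin n) : reesW p n R h j ^ p = 0 := by
  cases j with
  | inl i => simpa [reesW] using RingQuot.mkAlgHom_rel R (ReesWeylRel.xp (p := p) (R := R) (h := h) i)
  | inr i => simpa [reesW] using RingQuot.mkAlgHom_rel R (ReesWeylRel.yp (p := p) (R := R) (h := h) i)

/-- Commutators of generators. -/
theorem rees_comm (i j : Fin n ⊕ Fin n) : reesW p n R h i * reesW p n R h j.swap -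
    reesW p n R h j.swap * reesW p n R h i =
      algebraMap R _ (if i = j then reesSig i * h else 0) := by
  rcases i with i | i <;> rcases j with j | j
  · simp only [Sum.swap_inl, rees_yx, reesSig]
    split_ifs with h1 h2 h2 <;> simp_all
  · simp [rees_xx i j]
  · simp [rees_yy i j]
  · simp only [Sum.swap_inr, rees_yx, reesSig]
    split_ifs with h1 h2 h2 <;> simp_all

theorem rees_comm_scalar (i j : Fin n ⊕ Fin n) : ∃ c : R, reesW p n R h i * reesW p n R h j -
    reesW p n R h j * reesW p n R h i = algebraMap R _ (h * c) := by
  have := rees_comm (p := p) (R := R) (h := h) i j.swap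
  rw [Sum.swap_swap] at this
  rw [this]
  split_ifs
  · exact ⟨reesSig i, by rw [mul_comm]⟩
  · exact ⟨0, by simp⟩

theorem rees_induct {P : ReesWeyl p n R h → Prop} (hc : ∀ c : R, P (algebraMap R _ c))
    (hw : ∀ j, P (reesW p n R h j)) (ha : ∀ a b, P a → P b → P (a + b))
    (hm : ∀ a b, P a → P b → P (a * b)) (a : ReesWeyl p n R h) : P a := by
  obtain ⟨f, rfl⟩ := RingQuot.mkAlgHom_surjective R (ReesWeylRel p n R h) a
  induction f using FreeAlgebra.induction with
  | grade0 r => simpa using hc r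
  | grade1 j => exact hw j
  | mul a b h1 h2 => rw [map_mul]; exact hm _ _ h1 h2
  | add a b h1 h2 => rw [map_add]; exact ha _ _ h1 h2

/-- Lifting maps out of the algebra. -/
theorem rees_lift {B : Type} [Ring B] [Algebra R B] (w : Fin n ⊕ Fin n → B)
    (hxx : ∀ i j, w (.inl i) * w (.inl j) = w (.inl j) * w (.inl i))
    (hyy : ∀ i j, w (.inr i) * w (.inr j) = w (.inr j) * w (.inr i))
    (hyx : ∀ i j, w (.inr j) * w (.inl i) = w (.inl i) * w (.inr j) +
      if i = j then algebraMap R B h else 0)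
    (hp : ∀ j, w j ^ p = 0) :
    ∃ f : ReesWeyl p n R h →ₐ[R] B, ∀ j, f (reesW p n R h j) = w j := by
  refine ⟨RingQuot.liftAlgHom R ⟨FreeAlgebra.lift R w, ?_⟩, fun j => ?_⟩
  · intro a b hab
    induction hab with
    | xx i j => simpa using hxx i j
    | yy i j => simpa using hyy i j
    | yx i j => 
      have := hyx i j
      split_ifs at this ⊢ <;> simpa using this
    | xp i => simpa using hp _
    | yp i => simpa using hp _
  · simp [reesW]

/-- commutative modulo `h`. -/
theorem rees_comm_mod (a b : ReesWeyl p n R h) : ∃ c, a * b - b * a = h • c := by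
  induction a using rees_induct with
  | hc c => exact ⟨0, by rw [Algebra.commutes]; simp⟩
  | ha a a' h1 h2 =>
    obtain ⟨c, hc⟩ := h1
    obtain ⟨d, hd⟩ := h2
    exact ⟨c + d, by rw [smul_add, ← hc, ← hd]; noncomm_ring⟩
  | hm a a' h1 h2 =>
    obtain ⟨c, hc⟩ := h1
    obtain ⟨d, hd⟩ := h2
    refine ⟨a * d + c * a', ?_⟩
    rw [smul_add, ← mul_smul_comm, ← smul_mul_assoc, ← hc, ← hd]; simp only [mul_sub, sub_mul, mul_assoc]; abel
  | hw j =>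
    induction b using rees_induct with
    | hc c => exact ⟨0, by rw [Algebra.commutes]; simp⟩
    | ha a a' h1 h2 =>
      obtain ⟨c, hc⟩ := h1
      obtain ⟨d, hd⟩ := h2
      exact ⟨c + d, by rw [smul_add, ← hc, ← hd]; noncomm_ring⟩
    | hm a a' h1 h2 =>
      obtain ⟨c, hc⟩ := h1
      obtain ⟨d, hd⟩ := h2
      refine ⟨a * d + c * a', ?_⟩
      rw [smul_add, ← mul_smul_comm, ← smul_mul_assoc, ← hc, ← hd]; simp only [mul_sub, sub_mul, mul_assoc]; abel
    | hw i =>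
      obtain ⟨c, hc⟩ := rees_comm_scalar (p := p) (R := R) (h := h) j i
      exact ⟨algebraMap R _ c, by rw [hc, map_mul, Algebra.smul_def]⟩

open MvPolynomial in
/-- Polynomials all of whose monomials are divisible by some `X_i^p`. -/
def reesJ (p : ℕ) (σ R : Type) [CommRing R] : Submodule R (MvPolynomial σ R) where
  carrier := {f | ∀ α : σ →₀ ℕ, (∀ i, α i < p) → coeff α f = 0}
  zero_mem' := by intro α _; simp
  add_mem' := by intro a b ha hb α hα; simp [ha α hα, hb α hα]
  smul_mem' := by intro c a ha α hα; simp [ha α hα]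

open MvPolynomial in
theorem reesJ_X {σ : Type} (i : σ) (f : MvPolynomial σ R) (hf : f ∈ reesJ p σ R) :
    X i * f ∈ reesJ p σ R := by
  classical
  intro α hα
  rw [coeff_X_mul']
  split_ifs
  · exact hf _ fun j => lt_of_le_of_lt (by simp) (hα j)
  · rfl

open MvPolynomial in
theorem reesJ_D {σ : Type} (hpR : (p : R) = 0) (i : σ) (f : MvPolynomial σ R)
    (hf : f ∈ reesJ p σ R) : pderiv i f ∈ reesJ p σ R := by
  classical
  intro α hα
  rw [coeff_pderiv]
  by_cases hi : α i + 1 < p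
  · rw [hf, zero_mul]
    intro j
    by_cases hj : j = i
    · subst hj; simpa using hi
    · simpa [Finsupp.single_apply, Ne.symm hj] using hα j
  · have : α i + 1 = p := by have := hα i; omega
    have h2 : ((α i : R) + 1) = 0 := by rw [← hpR, ← this]; simp
    rw [h2, mul_zero]

open MvPolynomial in
theorem rees_pderiv_iter {σ : Type} (i : σ) (k : ℕ) (α : σ →₀ ℕ) (c : R) :
    ((pderiv i : Derivation R (MvPolynomial σ R) _).toLinearMap ^ k) (monomial α c) =
      monomial (α - Finsupp.single i k) (c * (α i).descFactorial k) := by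
  induction k with
  | zero => simp
  | succ k ih =>
    rw [pow_succ', Module.End.mul_apply, ih]
    simp only [Derivation.coeFn_coe, pderiv_monomial]
    congr 1
    · rw [tsub_tsub, ← Finsupp.single_add]
    · simp [Nat.descFactorial_succ, mul_comm, mul_left_comm]

open MvPolynomial in
theorem rees_pderiv_p {σ : Type} (hp : p.Prime) (hpR : (p : R) = 0) (i : σ)  :
    ((pderiv i : Derivation R (MvPolynomial σ R) _).toLinearMap ^ p) = 0 := by
  refine (basisMonomials σ R).ext fun α => ?_
  rw [coe_basisMonomials, rees_pderiv_iter]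
  have : (((α i).descFactorial p : ℕ) : R) = 0 := by
    obtain ⟨c, hc⟩ := (Nat.dvd_factorial hp.pos le_rfl).trans (Nat.factorial_dvd_descFactorial (α i) p)
    rw [hc]; simp [hpR]
  simp [this]

open MvPolynomial in
/-- The operators of the regular representation on polynomials. -/
def reesOp (n : ℕ) (R : Type) [CommRing R] (h : R) (j : Fin n ⊕ Fin n) :
    Module.End R (MvPolynomial (Fin n ⊕ Fin n) R) :=
  Sum.elim (fun i => LinearMap.mulLeft R (X (.inl i)))
    (fun i => LinearMap.mulLeft R (X (.inr i)) + h • (pderiv (Sum.inl i)).toLinearMap) j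

theorem reesOp_J (hpR : (p : R) = 0) (j : Fin n ⊕ Fin n) :
    reesJ p (Fin n ⊕ Fin n) R ≤ (reesJ p (Fin n ⊕ Fin n) R).comap (reesOp n R h j) := by
  intro f hf
  rcases j with i | i
  · exact reesJ_X _ f hf
  · exact add_mem (reesJ_X _ f hf) (Submodule.smul_mem _ _ (reesJ_D hpR _ f hf))

open MvPolynomial in
theorem reesOp_p (hp : p.Prime) (hpR : (p : R) = 0) (j : Fin n ⊕ Fin n) :
    reesOp n R h j ^ p = LinearMap.mulLeft R (X j ^ p) := by
  rcases j with i | i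
  · simp [reesOp, LinearMap.pow_mulLeft]
  · rcases subsingleton_or_nontrivial R with hR | hR
    · exact Subsingleton.elim _ _
    have : Fact p.Prime := ⟨hp⟩
    have : CharP (Module.End R (MvPolynomial (Fin n ⊕ Fin n) R)) p := by
      rw [CharP.charP_iff_prime_eq_zero hp]
      rw [← map_natCast (algebraMap R _), hpR, map_zero]
    have hc : Commute (LinearMap.mulLeft R (X (.inr i) : MvPolynomial (Fin n ⊕ Fin n) R))
        (h • (pderiv (Sum.inl i)).toLinearMap) := by
      apply Commute.smul_right
      apply LinearMap.ext
      intro f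
      simp
    simp only [reesOp, Sum.elim_inr]
    rw [add_pow_char_of_commute _ hc, smul_pow, rees_pderiv_p hp hpR, smul_zero, add_zero,
      LinearMap.pow_mulLeft]

theorem rees_pderiv_comm {σ : Type} (i j : σ) (f : MvPolynomial σ R) :
    MvPolynomial.pderiv i (MvPolynomial.pderiv j f) =
      MvPolynomial.pderiv j (MvPolynomial.pderiv i f) := by
  classical
  have : ⁅(MvPolynomial.pderiv i : Derivation R (MvPolynomial σ R) (MvPolynomial σ R)),
      (MvPolynomial.pderiv j : Derivation R (MvPolynomial σ R) (MvPolynomial σ R))⁆ = 0 := by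
    apply MvPolynomial.derivation_ext
    intro k
    simp [Derivation.commutator_apply, MvPolynomial.pderiv_X, Pi.single_apply, apply_ite]
  have h2 := congrArg (fun D => D f) this
  simpa [Derivation.commutator_apply, sub_eq_zero] using h2

theorem reesOp_inl (i : Fin n) (f) : reesOp n R h (.inl i) f = MvPolynomial.X (.inl i) * f := rfl

theorem reesOp_inr (i : Fin n) (f) : reesOp n R h (.inr i) f = MvPolynomial.X (.inr i) * f +
    MvPolynomial.C h * MvPolynomial.pderiv (.inl i) f := by
  rw [← MvPolynomial.smul_eq_C_mul]; rfl

theorem reesOp_yy (i j : Fin n) (f) : reesOp n R h (.inr i) (reesOp n R h (.inr j) f) =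
    reesOp n R h (.inr j) (reesOp n R h (.inr i) f) := by
  simp only [reesOp_inr, map_add, Derivation.leibniz, MvPolynomial.pderiv_C, smul_eq_mul,
    MvPolynomial.pderiv_X_of_ne (show (Sum.inr i : Fin n ⊕ Fin n) ≠ Sum.inl j by simp),
    MvPolynomial.pderiv_X_of_ne (show (Sum.inr j : Fin n ⊕ Fin n) ≠ Sum.inl i by simp)]
  rw [rees_pderiv_comm]
  ring

theorem reesOp_yx (i j : Fin n) (f) : reesOp n R h (.inr j) (reesOp n R h (.inl i) f) =
    reesOp n R h (.inl i) (reesOp n R h (.inr j) f) + if i = j then h • f else 0 := by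
  split_ifs with hij
  · subst hij
    simp only [reesOp_inr, reesOp_inl, Derivation.leibniz, smul_eq_mul,
      MvPolynomial.pderiv_X_self, MvPolynomial.smul_eq_C_mul]
    ring
  · simp only [reesOp_inr, reesOp_inl, Derivation.leibniz, smul_eq_mul,
      MvPolynomial.pderiv_X_of_ne (show (Sum.inl i : Fin n ⊕ Fin n) ≠ Sum.inl j by simpa using hij)]
    ring

open MvPolynomial in
theorem rees_rep (hp : p.Prime) (hpR : (p : R) = 0) :
    ∃ f : ReesWeyl p n R h →ₐ[R] Module.End R (_ ⧸ reesJ p (Fin n ⊕ Fin n) R),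
      ∀ j, f (reesW p n R h j) = Submodule.mapQ _ _ (reesOp n R h j) (reesOp_J hpR j) := by
  have key : ∀ j f, Submodule.mapQ _ _ (reesOp n R h j) (reesOp_J (p := p) hpR j)
    (Submodule.Quotient.mk f) = Submodule.Quotient.mk (reesOp n R h j f) := fun j f => rfl
  apply rees_lift
  · intro i j
    apply LinearMap.ext
    intro m
    obtain ⟨f, rfl⟩ := Submodule.Quotient.mk_surjective _ m
    simp only [Module.End.mul_apply, key]
    simp only [reesOp_inl, mul_left_comm]
  · intro i j
    apply LinearMap.ext
    intro m
    obtain ⟨f, rfl⟩ := Submodule.Quotient.mk_surjective _ m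
    simp only [Module.End.mul_apply, key]
    rw [reesOp_yy]
  · intro i j
    apply LinearMap.ext
    intro m
    obtain ⟨f, rfl⟩ := Submodule.Quotient.mk_surjective _ m
    simp only [Module.End.mul_apply, LinearMap.add_apply, key]
    rw [reesOp_yx, Submodule.Quotient.mk_add]
    split_ifs <;> rfl
  · intro j
    apply LinearMap.ext
    intro m
    obtain ⟨f, rfl⟩ := Submodule.Quotient.mk_surjective _ m
    rw [← Submodule.mapQ_pow]
    simp only [reesOp_p hp hpR]
    rw [LinearMap.zero_apply, Submodule.mapQ_apply, Submodule.Quotient.mk_eq_zero]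
    intro α hα
    rw [LinearMap.mulLeft_apply]
    rw [X_pow_eq_monomial, coeff_monomial_mul']
    rw [if_neg]
    intro hle
    have := hle j
    simp at this
    have := hα j
    omega

theorem rees_section (hp : p.Prime) (hpR : (p : R) = 0) :
    ∃ s : (_ ⧸ reesJ p (Fin n ⊕ Fin n) R) →ₗ[R] ReesWeyl p n R h,
      s (Submodule.Quotient.mk 1) = 1 ∧
      ∀ j m, s (Submodule.mapQ _ _ (reesOp n R h j) (reesOp_J hpR j) m) =
        reesW p n R h j * s m := by
  classical
  obtain ⟨px, hpx⟩ := rees_commuting_lift (R := R) (fun i => reesW p n R h (.inl i)) rees_xx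
  obtain ⟨py, hpy⟩ := rees_commuting_lift (R := R) (fun i => reesW p n R h (.inr i)) rees_yy
  have hyx : ∀ j f, reesW p n R h (.inr j) * px f = px f * reesW p n R h (.inr j) +
      h • px (MvPolynomial.pderiv j f) := by
    intro j f
    induction f using MvPolynomial.induction_on with
    | C a => simp [MvPolynomial.algHom_C, Algebra.commutes]
    | add f g hf hg => simp only [map_add, mul_add, hf, hg, add_mul, smul_add]; abel
    | mul_X f i hf =>
      simp only [map_mul, Derivation.leibniz, map_add, hpx, smul_eq_mul, ← mul_assoc, hf, add_mul, smul_add]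
      rw [mul_assoc (px f), rees_yx, MvPolynomial.pderiv_X, Pi.single_apply]
      have hc : px (MvPolynomial.X i) * px (MvPolynomial.pderiv j f) =
        px (MvPolynomial.pderiv j f) * px (MvPolynomial.X i) := by
        rw [← map_mul, mul_comm, map_mul]
      rw [← hpx, hc]
      split_ifs with h1 
      · simp only [mul_add, mul_assoc, add_assoc, Algebra.smul_def, Algebra.commutes, map_one, one_mul]
      · simp [mul_assoc]
  let l : (Fin n ⊕ Fin n →₀ ℕ) → (Fin n →₀ ℕ) := fun α => α.comapDomain Sum.inl Sum.inl_injective.injOn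
  let r : (Fin n ⊕ Fin n →₀ ℕ) → (Fin n →₀ ℕ) := fun α => α.comapDomain Sum.inr Sum.inr_injective.injOn
  let s0 : MvPolynomial (Fin n ⊕ Fin n) R →ₗ[R] ReesWeyl p n R h :=
    (MvPolynomial.basisMonomials _ R).constr R
      (fun α => px (MvPolynomial.monomial (l α) 1) * py (MvPolynomial.monomial (r α) 1))
  have hs0 : ∀ α c, s0 (MvPolynomial.monomial α c) =
      c • (px (MvPolynomial.monomial (l α) 1) * py (MvPolynomial.monomial (r α) 1)) := by
    intro α c
    have h1 : MvPolynomial.monomial α c = c • (MvPolynomial.basisMonomials (Fin n ⊕ Fin n) R) α := by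
      simp [MvPolynomial.smul_monomial]
    rw [h1, map_smul, Module.Basis.constr_basis]
  have hJ : reesJ p (Fin n ⊕ Fin n) R ≤ LinearMap.ker s0 := by
    intro f hf
    rw [LinearMap.mem_ker, f.as_sum, map_sum]
    refine Finset.sum_eq_zero fun α _ => ?_
    rw [hs0]
    by_cases hα : ∀ i, α i < p
    · rw [hf α hα, zero_smul]
    · push Not at hα
      obtain ⟨i, hi⟩ := hα
      have gen : ∀ (q : MvPolynomial (Fin n) R →ₐ[R] ReesWeyl p n R h) (i) (β : Fin n →₀ ℕ), 
          q (MvPolynomial.X i) ^ p = 0 → p ≤ β i → q (MvPolynomial.monomial β 1) = 0 := by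
        intro q i β hq hβ
        have : MvPolynomial.monomial β (1 : R) = MvPolynomial.X i ^ p *
            MvPolynomial.monomial (β - Finsupp.single i p) 1 := by
          rw [MvPolynomial.X_pow_eq_monomial, MvPolynomial.monomial_mul, one_mul, add_tsub_cancel_of_le]
          simpa using hβ
        rw [this, map_mul, map_pow, hq, zero_mul]
      rcases i with i | i
      · rw [gen px i _ (by rw [hpx]; exact rees_wp _) hi]; simp
      · rw [gen py i _ (by rw [hpy]; exact rees_wp _) hi]; simp
  have hlx : ∀ α i, l (α + Finsupp.single (.inl i) 1) = l α + Finsupp.single i 1 := by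
    intro α i; ext k; simp [l, Finsupp.single_apply]
  have hrx : ∀ α i, r (α + Finsupp.single (.inl i) 1) = r α := by
    intro α i; ext k; simp [r, Finsupp.single_apply]
  have hly : ∀ α i, l (α + Finsupp.single (.inr i) 1) = l α := by
    intro α i; ext k; simp [l, Finsupp.single_apply]
  have hry : ∀ α i, r (α + Finsupp.single (.inr i) 1) = r α + Finsupp.single i 1 := by
    intro α i; ext k; simp [r, Finsupp.single_apply]
  have hld : ∀ α i, l (α - Finsupp.single (.inl i) 1) = l α - Finsupp.single i 1 := by
    intro α i; ext k; simp [l, Finsupp.single_apply]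
  have hrd : ∀ α i, r (α - Finsupp.single (.inl i) 1) = r α := by
    intro α i; ext k; simp [r, Finsupp.single_apply]
  have hXm : ∀ {σ : Type} (i : σ) (α : σ →₀ ℕ) (c : R), MvPolynomial.X i * MvPolynomial.monomial α c =
      MvPolynomial.monomial (α + Finsupp.single i 1) c := by
    intro σ i α c
    rw [MvPolynomial.X, MvPolynomial.monomial_mul, one_mul, add_comm]
  refine ⟨Submodule.liftQ _ s0 hJ, ?_, ?_⟩
  · rw [Submodule.liftQ_apply, MvPolynomial.one_def, hs0]
    have h1 : l 0 = 0 := by ext; simp [l]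
    have h2 : r 0 = 0 := by ext; simp [r]
    rw [h1, h2, ← MvPolynomial.one_def]; simp
  · intro j m
    obtain ⟨f, rfl⟩ := Submodule.Quotient.mk_surjective _ m
    rw [Submodule.mapQ_apply, Submodule.liftQ_apply, Submodule.liftQ_apply]
    suffices s0 ∘ₗ reesOp n R h j = LinearMap.mulLeft R (reesW p n R h j) ∘ₗ s0 from
      LinearMap.congr_fun this f
    refine (MvPolynomial.basisMonomials _ R).ext fun α => ?_
    simp only [LinearMap.comp_apply, LinearMap.mulLeft_apply, MvPolynomial.coe_basisMonomials]
    rcases j with i | i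
    · simp only [reesOp, Sum.elim_inl, LinearMap.mulLeft_apply, hXm, hs0, hlx, hrx]
      rw [← hXm, map_mul, hpx]; simp [mul_assoc]
    · simp only [reesOp, Sum.elim_inr, LinearMap.mulLeft_apply, LinearMap.add_apply, map_add,
        LinearMap.smul_apply, map_smul, hXm, hs0, hly, hry,
        Derivation.coeFn_coe, MvPolynomial.pderiv_monomial, hld, hrd]
      rw [← hXm, map_mul, hpy, one_smul, one_smul, ← mul_assoc _ (px _) (py _), hyx, add_mul,
        mul_assoc, MvPolynomial.pderiv_monomial]
      congr 1
      rw [smul_mul_assoc]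
      congr 1
      rw [← smul_mul_assoc, ← map_smul, MvPolynomial.smul_monomial]
      simp [l]

theorem rees_regular (hp : p.Prime) (hpR : (p : R) = 0) (hnz : h ∈ nonZeroDivisors R)
    (a : ReesWeyl p n R h) (ha : h • a = 0) : a = 0 := by
  obtain ⟨ρ, hρ⟩ := rees_rep (n := n) (h := h) hp hpR
  obtain ⟨s, hs1, hs⟩ := rees_section (n := n) (h := h) hp hpR
  have key : ∀ a m, s (ρ a m) = a * s m := by
    intro a
    induction a using rees_induct with
    | hc c => intro m; simp [Algebra.smul_def]
    | hw j => intro m; rw [hρ, hs]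
    | ha a b h1 h2 => intro m; simp [h1, h2, add_mul]
    | hm a b h1 h2 => intro m; simp [h1, h2, mul_assoc]
  have h1 : a = s (ρ a (Submodule.Quotient.mk 1)) := by rw [key, hs1, mul_one]
  have h2 : h • ρ a (Submodule.Quotient.mk 1) = 0 := by
    rw [← LinearMap.smul_apply, ← map_smul, ha]; simp
  obtain ⟨f, hf⟩ := Submodule.Quotient.mk_surjective _ (ρ a (Submodule.Quotient.mk 1))
  rw [h1, ← hf]
  rw [← hf, ← Submodule.Quotient.mk_smul, Submodule.Quotient.mk_eq_zero] at h2
  have : f ∈ reesJ p (Fin n ⊕ Fin n) R := by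
    intro α hα
    have := h2 α hα
    rw [MvPolynomial.coeff_smul, smul_eq_mul, mul_comm] at this
    exact (mem_nonZeroDivisors_iff_right.mp hnz) _ this
  rw [(Submodule.Quotient.mk_eq_zero _).mpr this, map_zero]

theorem rees_finite (hp : p.Prime) (hpR : (p : R) = 0) : Module.Finite R (ReesWeyl p n R h) := by
  obtain ⟨ρ, hρ⟩ := rees_rep (n := n) (h := h) hp hpR
  obtain ⟨s, hs1, hs⟩ := rees_section (n := n) (h := h) hp hpR
  have key : ∀ a m, s (ρ a m) = a * s m := by
    intro a
    induction a using rees_induct with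
    | hc c => intro m; simp [Algebra.smul_def]
    | hw j => intro m; rw [hρ, hs]
    | ha a b h1 h2 => intro m; simp [h1, h2, add_mul]
    | hm a b h1 h2 => intro m; simp [h1, h2, mul_assoc]
  have hsurj : Function.Surjective s := fun a => ⟨ρ a (Submodule.Quotient.mk 1), by
    rw [key, hs1, mul_one]⟩
  suffices Module.Finite R (_ ⧸ reesJ p (Fin n ⊕ Fin n) R) from Module.Finite.of_surjective s hsurj
  let T : Set (Fin n ⊕ Fin n →₀ ℕ) := {α | ∀ i, α i < p}
  have hT : T.Finite := by
    refine (Set.finite_Iic (Finsupp.equivFunOnFinite.symm (fun _ : Fin n ⊕ Fin n => p))).subset ?_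
    intro α hα i
    exact (hα i).le
  refine ⟨⟨(hT.image (fun α => Submodule.Quotient.mk (MvPolynomial.monomial α 1))).toFinset, ?_⟩⟩
  rw [eq_top_iff]
  rintro m -
  obtain ⟨f, rfl⟩ := Submodule.Quotient.mk_surjective _ m
  rw [f.as_sum, ← Submodule.mkQ_apply, map_sum]
  refine Submodule.sum_mem _ fun α _ => ?_
  by_cases hα : α ∈ T
  · have : MvPolynomial.monomial α (MvPolynomial.coeff α f) =
      (MvPolynomial.coeff α f) • MvPolynomial.monomial α (1 : R) := by
        simp [MvPolynomial.smul_monomial]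
    rw [this, map_smul]
    refine Submodule.smul_mem _ _ (Submodule.subset_span ?_)
    simp only [Set.Finite.coe_toFinset]
    exact ⟨α, hα, rfl⟩
  · have : MvPolynomial.monomial α (MvPolynomial.coeff α f) ∈ reesJ p (Fin n ⊕ Fin n) R := by
      intro β hβ
      rw [MvPolynomial.coeff_monomial, if_neg]
      rintro rfl
      exact hα hβ
    rw [Submodule.mkQ_apply, (Submodule.Quotient.mk_eq_zero _).mpr this]
    exact zero_mem _

theorem rees_aug (hp : p.Prime) :
    ∃ ε : ReesWeyl p n R h →ₐ[R] R ⧸ Ideal.span {h}, ∀ j, ε (reesW p n R h j) = 0 := by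
  apply rees_lift (fun _ => 0)
  · simp
  · simp
  · intro i j
    have : algebraMap R (R ⧸ Ideal.span {h}) h = 0 := by
      rw [Ideal.Quotient.algebraMap_eq, Ideal.Quotient.eq_zero_iff_mem]
      exact Ideal.mem_span_singleton_self h
    simp [this]
  · intro j; exact zero_pow hp.ne_zero

theorem rees_unit_one_add (hp : p.Prime) (hpR : (p : R) = 0) [IsAdicComplete (Ideal.span {h}) R]
    (z : ReesWeyl p n R h) : IsUnit (1 + h • z) := by
  have := rees_finite (n := n) (h := h) hp hpR
  have hj := IsAdicComplete.le_jacobson_bot (Ideal.span {h})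
  have gen : ∀ f : ReesWeyl p n R h →ₗ[R] ReesWeyl p n R h,
      (∀ a, ∃ b, a = f a + h • b) → Function.Surjective f := by
    intro f hf
    rw [← LinearMap.range_eq_top, eq_top_iff]
    refine Submodule.le_of_le_smul_of_le_jacobson_bot Module.Finite.fg_top hj ?_
    rintro a -
    obtain ⟨b, hb⟩ := hf a
    rw [hb]
    exact Submodule.add_mem_sup ⟨a, rfl⟩
      (Submodule.smul_mem_smul (Ideal.mem_span_singleton_self h) trivial)
  obtain ⟨r, hr⟩ := gen (LinearMap.mulLeft R (1 + h • z))
    (fun a => ⟨-(z * a), by simp [add_mul]⟩) 1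
  obtain ⟨l, hl⟩ := gen (LinearMap.mulRight R (1 + h • z))
    (fun a => ⟨-(a * z), by simp [mul_add]⟩) 1
  exact isUnit_iff_exists_and_exists.mpr ⟨⟨r, hr⟩, ⟨l, hl⟩⟩

theorem rees_unit (hp : p.Prime) (hpR : (p : R) = 0) [IsAdicComplete (Ideal.span {h}) R]
    (ε : ReesWeyl p n R h →ₐ[R] R ⧸ Ideal.span {h}) (hε : ∀ j, ε (reesW p n R h j) = 0)
    (a : ReesWeyl p n R h) (ha : IsUnit (ε a)) : IsUnit a := by
  let I : Ideal (ReesWeyl p n R h) := Ideal.span {algebraMap R _ h}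
  have hI : ∀ a, a ∈ I ↔ ∃ b, a = h • b := by
    intro a
    rw [Ideal.mem_span_singleton']
    constructor
    · rintro ⟨b, rfl⟩; exact ⟨b, by rw [Algebra.smul_def, Algebra.commutes]⟩
    · rintro ⟨b, rfl⟩; exact ⟨b, by rw [Algebra.smul_def, Algebra.commutes]⟩
  have : I.IsTwoSided := ⟨by
    intro a b ha
    rw [hI] at ha ⊢
    obtain ⟨c, rfl⟩ := ha
    exact ⟨c * b, by simp⟩⟩
  have hcomm : ∀ a b : ReesWeyl p n R h ⧸ I, Commute a b := by
    intro a b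
    obtain ⟨a, rfl⟩ := Ideal.Quotient.mk_surjective a
    obtain ⟨b, rfl⟩ := Ideal.Quotient.mk_surjective b
    rw [Commute, SemiconjBy, ← map_mul, ← map_mul, Ideal.Quotient.mk_eq_mk_iff_sub_mem, hI]
    exact rees_comm_mod a b
  have key : ∀ a, ∃ c : R, ε a = algebraMap _ _ c ∧
      IsNilpotent (Ideal.Quotient.mk I (a - algebraMap R _ c)) := by
    intro a
    induction a using rees_induct with
    | hc c => exact ⟨c, by simp, by simp⟩
    | hw j => exact ⟨0, by simp [hε], ⟨p, by rw [map_zero, sub_zero, ← map_pow, rees_wp, map_zero]⟩⟩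
    | ha a b h1 h2 =>
      obtain ⟨c, hc, hc'⟩ := h1
      obtain ⟨d, hd, hd'⟩ := h2
      refine ⟨c + d, by rw [map_add, map_add, hc, hd], ?_⟩
      have : a + b - algebraMap R _ (c + d) = (a - algebraMap R _ c) + (b - algebraMap R _ d) := by
        rw [map_add]; abel
      rw [this, map_add]
      exact (hcomm _ _).isNilpotent_add hc' hd'
    | hm a b h1 h2 =>
      obtain ⟨c, hc, hc'⟩ := h1
      obtain ⟨d, hd, hd'⟩ := h2
      refine ⟨c * d, by rw [map_mul, map_mul, hc, hd], ?_⟩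
      have : a * b - algebraMap R _ (c * d) =
          (a - algebraMap R _ c) * b + algebraMap R _ c * (b - algebraMap R _ d) := by
        rw [map_mul, sub_mul, mul_sub]; abel
      rw [this, map_add, map_mul, map_mul]
      exact (hcomm _ _).isNilpotent_add ((hcomm _ _).isNilpotent_mul_right hc')
        ((hcomm _ _).isNilpotent_mul_left hd')
  obtain ⟨c, hc, hn⟩ := key a
  have hcu : IsUnit (Ideal.Quotient.mk I (algebraMap R _ c)) := by
    rw [hc] at ha
    obtain ⟨d, hd⟩ := ha.exists_right_inv
    obtain ⟨d, rfl⟩ := Ideal.Quotient.mk_surjective d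
    rw [Ideal.Quotient.algebraMap_eq, ← map_mul, ← map_one (Ideal.Quotient.mk _),
      Ideal.Quotient.mk_eq_mk_iff_sub_mem, Ideal.mem_span_singleton'] at hd
    obtain ⟨e, he⟩ := hd
    have h1 : Ideal.Quotient.mk I (algebraMap R _ c) * Ideal.Quotient.mk I (algebraMap R _ d) = 1 := by
      rw [← map_mul, ← map_mul, ← map_one (Ideal.Quotient.mk _),
        Ideal.Quotient.mk_eq_mk_iff_sub_mem, hI]
      refine ⟨algebraMap R _ e, ?_⟩
      rw [← map_one (algebraMap R _), ← map_sub, ← he, Algebra.smul_def, ← map_mul, mul_comm]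
    exact isUnit_iff_exists_and_exists.mpr ⟨⟨_, h1⟩, ⟨_, (hcomm _ _).eq.trans h1⟩⟩
  have hau : IsUnit (Ideal.Quotient.mk I a) := by
    have : Ideal.Quotient.mk I a = Ideal.Quotient.mk I (algebraMap R _ c) +
      Ideal.Quotient.mk I (a - algebraMap R _ c) := by rw [← map_add]; congr 1; abel
    rw [this]
    exact IsNilpotent.isUnit_add_left_of_commute hn hcu (hcomm _ _)
  have lift1 : ∀ a b : ReesWeyl p n R h, Ideal.Quotient.mk I a * Ideal.Quotient.mk I b = 1 →
      IsUnit (a * b) := by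
    intro a b hab
    rw [← map_mul, ← map_one (Ideal.Quotient.mk _),
        Ideal.Quotient.mk_eq_mk_iff_sub_mem, hI] at hab
    obtain ⟨z, hz⟩ := hab
    have : a * b = 1 + h • z := by rw [← hz]; abel
    rw [this]
    exact rees_unit_one_add hp hpR z
  obtain ⟨⟨A, B, hAB, hBA⟩, hA⟩ := hau
  obtain ⟨b, rfl⟩ := Ideal.Quotient.mk_surjective B
  change A = _ at hA
  subst hA
  obtain ⟨v, hv⟩ := (lift1 a b hAB).exists_right_inv
  obtain ⟨w, hw⟩ := (lift1 b a hBA).exists_left_inv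
  exact isUnit_iff_exists_and_exists.mpr
    ⟨⟨b * v, by rw [← mul_assoc, hv]⟩, ⟨w * b, by rw [mul_assoc, hw]⟩⟩

theorem rees_div (hp : p.Prime) (hpR : (p : R) = 0) (hnz : h ∈ nonZeroDivisors R)
    (T : ReesWeyl p n R h →ₗ[R] ReesWeyl p n R h) (hT : ∀ a, ∃ c, T a = h • c) :
    ∃ D : ReesWeyl p n R h →ₗ[R] ReesWeyl p n R h, ∀ a, h • D a = T a := by
  have inj : ∀ a b : ReesWeyl p n R h, h • a = h • b → a = b := by
    intro a b hab
    rw [← sub_eq_zero]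
    exact rees_regular hp hpR hnz _ (by rw [smul_sub, hab, sub_self])
  choose f hf using hT
  refine ⟨⟨⟨f, ?_⟩, ?_⟩, fun a => (hf a).symm⟩
  · intro a b
    apply inj
    rw [smul_add, ← hf, ← hf, ← hf, map_add]
  · intro c a
    apply inj
    rw [RingHom.id_apply, smul_comm, ← hf, ← hf, map_smul]

/-- The filtration by powers of a submodule. -/
def reesF {R A : Type} [CommRing R] [Ring A] [Algebra R A] (I : Submodule R A) : ℕ → Submodule R A
  | 0 => ⊤
  | k + 1 => I * reesF I k

/-- Composite of `(p-1)`-st powers of operators. -/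
def reesT {R A ι : Type} [CommRing R] [Ring A] [Algebra R A] (p : ℕ) (δ : ι → Module.End R A) :
    List ι → Module.End R A
  | [] => 1
  | r :: L => reesT p δ L * δ r ^ (p - 1)

/-- The top monomial. -/
def reesV {A ι : Type} [Ring A] (p : ℕ) (z : ι → A) : List ι → A
  | [] => 1
  | r :: L => z r ^ (p - 1) * reesV p z L

theorem reesT_comm {R A ι : Type} [CommRing R] [Ring A] [Algebra R A] (p : ℕ)
    (δ : ι → Module.End R A) (hδ : ∀ i j, Commute (δ i) (δ j)) (j : ι) (L : List ι) :
    Commute (δ j) (reesT p δ L) := by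
  induction L with
  | nil => exact Commute.one_right _
  | cons r L ih => exact ih.mul_right ((hδ _ _).pow_right _)

theorem reesT_kill {R A ι : Type} [CommRing R] [Ring A] [Algebra R A] (p : ℕ) (hp : p ≠ 0)
    (δ : ι → Module.End R A) (hδ : ∀ i j, Commute (δ i) (δ j)) (hδp : ∀ i, δ i ^ p = 0)
    (j : ι) (L : List ι) (hj : j ∈ L) : δ j * reesT p δ L = 0 := by
  induction L with
  | nil => simp at hj
  | cons r L ih =>
    rw [reesT, ← mul_assoc]
    rcases List.mem_cons.mp hj with rfl | hj
    · rw [(reesT_comm p δ hδ j L).eq, mul_assoc, mul_pow_sub_one hp, hδp, mul_zero]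
    · rw [ih hj, zero_mul]

/-- The leading-term computation. -/
theorem rees_leading {R A ι : Type} [CommRing R] [Ring A] [Algebra R A] (p : ℕ)
    (I : Submodule R A) (hIl : ∀ a b, b ∈ I → a * b ∈ I)
    (d : ι → A →ₗ[R] A) (G : ι → A) (δ : ι → Module.End R A)
    (hδ : ∀ j a, δ j a = d j a + G j * a)
    (hd : ∀ j a b, d j (a * b) = d j a * b + a * d j b)
    (z : ι → A) (c : ι → R) (hz : ∀ j, d j (z j) = algebraMap R A (c j))
    (hz' : ∀ i j, i ≠ j → d i (z j) = 0) (hzI : ∀ j, z j ∈ I) (L : List ι) (hL : L.Nodup) :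
    reesT p δ L (reesV p z L) - algebraMap R A ((L.map fun j => (c j) ^ (p-1) * ((p-1).factorial : R)).prod)
      ∈ reesF I 1 := by
  have hFl : ∀ k a b, b ∈ reesF I k → a * b ∈ reesF I k := by
    intro k a b hb
    cases k with
    | zero => trivial
    | succ k =>
      rw [reesF] at hb ⊢
      induction hb using Submodule.mul_induction_on' with
      | mem_mul_mem m hm n hn => rw [← mul_assoc]; exact Submodule.mul_mem_mul (hIl _ _ hm) hn
      | add x hx y hy h1 h2 => rw [mul_add]; exact add_mem h1 h2
  have hFd : ∀ k j b, b ∈ reesF I (k + 1) → d j b ∈ reesF I k := by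
    intro k j
    induction k with
    | zero => intros; trivial
    | succ k ih =>
      intro b hb
      rw [reesF] at hb
      induction hb using Submodule.mul_induction_on' with
      | mem_mul_mem m hm n hn =>
        rw [hd]
        exact add_mem (hFl _ _ _ hn) (Submodule.mul_mem_mul hm (ih _ hn))
      | add x hx y hy h1 h2 => rw [map_add]; exact add_mem h1 h2
  have hFm : ∀ k, reesF I (k + 1) ≤ reesF I k := by
    intro k
    induction k with
    | zero => exact le_top
    | succ k ih => exact mul_le_mul_right ih I
  have hFδ : ∀ k j b, b ∈ reesF I (k + 1) → δ j b ∈ reesF I k := by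
    intro k j b hb
    rw [hδ]
    exact add_mem (hFd _ _ _ hb) (hFl _ _ _ (hFm _ hb))
  have hFδp : ∀ m k j b, b ∈ reesF I (k + m) → (δ j ^ m) b ∈ reesF I k := by
    intro m k j
    induction m with
    | zero => intro b hb; simpa using hb
    | succ m ih =>
      intro b hb
      rw [pow_succ, Module.End.mul_apply]
      exact ih _ (hFδ _ _ _ hb)
  have hFT : ∀ L k b, b ∈ reesF I (k + L.length * (p - 1)) → reesT p δ L b ∈ reesF I k := by
    intro L
    induction L with
    | nil => intro k b hb; simpa [reesT] using hb
    | cons r L ih =>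
      intro k b hb
      rw [reesT, Module.End.mul_apply]
      refine ih _ _ (hFδp _ _ _ _ ?_)
      rwa [List.length_cons, add_mul, one_mul, ← add_assoc] at hb
  have hzp : ∀ m k j b, b ∈ reesF I k → z j ^ m * b ∈ reesF I (k + m) := by
    intro m k j b hb
    induction m with
    | zero => simpa using hb
    | succ m ih =>
      rw [pow_succ', mul_assoc]
      exact Submodule.mul_mem_mul (hzI j) ih
  have hV : ∀ L, reesV p z L ∈ reesF I (L.length * (p - 1)) := by
    intro L
    induction L with
    | nil => rw [List.length_nil, zero_mul]; trivial
    | cons r L ih =>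
      rw [reesV, List.length_cons, add_mul, one_mul]
      exact hzp _ _ _ _ ih
  have hd1 : ∀ j, d j 1 = 0 := by
    intro j
    have := hd j 1 1
    simpa using this
  have hdpow0 : ∀ i j, i ≠ j → ∀ m, d i (z j ^ m) = 0 := by
    intro i j hij m
    induction m with
    | zero => simpa using hd1 i
    | succ m ih => rw [pow_succ, hd, ih, hz' i j hij]; simp
  have hdV : ∀ L j, j ∉ L → d j (reesV p z L) = 0 := by
    intro L j
    induction L with
    | nil => intro _; exact hd1 j
    | cons r L ih =>
      intro hj
      rw [List.mem_cons, not_or] at hj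
      rw [reesV, hd, hdpow0 _ _ hj.1, ih hj.2]; simp
  have hdpow : ∀ j m, d j (z j ^ (m + 1)) = ((m + 1 : ℕ) * c j : R) • z j ^ m := by
    intro j m
    induction m with
    | zero => simp [hz, Algebra.smul_def]
    | succ m ih =>
      rw [pow_succ, hd, ih, hz, ← Algebra.commutes, ← Algebra.smul_def, smul_mul_assoc, ← pow_succ,
        ← add_smul]
      congr 1
      push_cast
      ring
  have step : ∀ j a k, a ∈ reesF I k → d j a = 0 → ∀ m,
      (δ j ^ m) (z j ^ m * a) - (c j ^ m * (m.factorial : R)) • a ∈ reesF I (k + 1) := by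
    intro j a k ha hda m
    induction m with
    | zero => simp
    | succ m ih =>
      have h1 : δ j (z j ^ (m + 1) * a) = ((m + 1 : ℕ) * c j : R) • (z j ^ m * a) +
          G j * (z j ^ (m + 1) * a) := by
        rw [hδ, hd, hdpow, hda, mul_zero, add_zero, smul_mul_assoc]
      have h2 : (δ j ^ m) (G j * (z j ^ (m + 1) * a)) ∈ reesF I (k + 1) := by
        apply hFδp
        apply hFl
        have := hzp (m + 1) k j a ha
        rwa [show k + 1 + m = k + (m + 1) by ring]
      rw [pow_succ (δ j), Module.End.mul_apply, h1, map_add, map_smul]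
      have h3 := Submodule.smul_mem _ ((m + 1 : ℕ) * c j : R) ih
      have h4 := add_mem h3 h2
      convert h4 using 1
      rw [smul_sub, smul_smul, Nat.factorial_succ]
      have : (((m + 1 : ℕ) * c j : R) * (c j ^ m * (m.factorial : R))) =
        c j ^ (m + 1) * (((m + 1) * m.factorial : ℕ) : R) := by push_cast; ring
      rw [this]
      abel
  induction L with
  | nil => simp [reesT, reesV]
  | cons r L ih =>
    rw [List.nodup_cons] at hL
    have h1 := hFT L 1 _ (by
      rw [add_comm]
      exact step r (reesV p z L) _ (hV L) (hdV L r hL.1) (p - 1))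
    rw [map_sub, map_smul] at h1
    have h2 := Submodule.smul_mem _ (c r ^ (p - 1) * ((p - 1).factorial : R)) (ih hL.2)
    have h3 := add_mem h1 h2
    rw [reesT, reesV, Module.End.mul_apply, List.map_cons, List.prod_cons]
    convert h3 using 1
    rw [smul_sub, map_mul (algebraMap R A), ← Algebra.smul_def]
    abel

theorem rees_fact_unit (hp : p.Prime) (hpR : (p : R) = 0) : IsUnit (((p - 1).factorial : ℕ) : R) := by
  have : Fact p.Prime := ⟨hp⟩
  have h1 : (((p - 1).factorial + 1 : ℕ) : ZMod p) = 0 := by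
    push_cast; rw [ZMod.wilsons_lemma]; ring
  rw [ZMod.natCast_eq_zero_iff] at h1
  obtain ⟨k, hk⟩ := h1
  have h2 : (((p - 1).factorial : ℕ) : R) + 1 = 0 := by
    have := congrArg (Nat.cast : ℕ → R) hk
    simpa [hpR] using this
  rw [eq_neg_of_add_eq_zero_left h2]
  exact isUnit_one.neg

theorem rees_sub_pow {B : Type} [Ring B] (p : ℕ) [Fact p.Prime] [CharP B p] (x y : B)
    (hxy : x * y = y * x) : (x - y) ^ p = x ^ p - y ^ p :=
  sub_pow_char_of_commute p hxy

theorem rees_main (hp : p.Prime) (hpR : (p : R) = 0) [IsAdicComplete (Ideal.span {h}) R]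
    (hnz : h ∈ nonZeroDivisors R)
    (φ : ReesWeyl p n R h ≃ₐ[R] ReesWeyl p n R h)
    (hφ : ∀ a : ReesWeyl p n R h, ∃ c : ReesWeyl p n R h, φ a - a = h • c) :
    ∃ u : ReesWeyl p n R h, IsUnit u ∧ ∀ a, φ a * u = u * a := by
  rcases subsingleton_or_nontrivial (ReesWeyl p n R h) with hA | hA
  · exact ⟨1, isUnit_one, fun a => Subsingleton.elim _ _⟩
  have inj : ∀ a b : ReesWeyl p n R h, h • a = h • b → a = b := by
    intro a b hab
    rw [← sub_eq_zero]
    exact rees_regular hp hpR hnz _ (by rw [smul_sub, hab, sub_self])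
  obtain ⟨ε, hε⟩ := rees_aug (n := n) (R := R) (h := h) hp
  let w := reesW p n R h
  have hd0 := fun j => rees_div hp hpR hnz (LinearMap.mulLeft R (w j) - LinearMap.mulRight R (w j))
    (fun a => by simpa using rees_comm_mod (w j) a)
  choose d hd using hd0
  have hd' : ∀ j a, h • d j a = w j * a - a * w j := by intro j a; rw [hd]; simp
  choose G hG using fun j => hφ (w j)
  let δ : Fin n ⊕ Fin n → Module.End R (ReesWeyl p n R h) := fun j => d j + LinearMap.mulLeft R (G j)
  have hδ : ∀ j a, h • δ j a = φ (w j) * a - a * w j := by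
    intro j a
    simp only [δ, LinearMap.add_apply, smul_add, hd', LinearMap.mulLeft_apply]
    rw [← smul_mul_assoc, ← hG, sub_mul]
    abel
  have hcomm : ∀ i j, Commute (δ i) (δ j) := by
    intro i j
    apply LinearMap.ext
    intro a
    apply inj
    apply inj
    simp only [Module.End.mul_apply]
    have e0 : ∀ i j, h • h • δ i (δ j a) = φ (w i) * (φ (w j) * a - a * w j) -
        (φ (w j) * a - a * w j) * w i := by
      intro i j
      rw [hδ, smul_sub, ← mul_smul_comm, ← smul_mul_assoc, hδ]
    rw [e0, e0]
    obtain ⟨c, hc⟩ := rees_comm_scalar (p := p) (R := R) (h := h) i j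
    have e1 : φ (w i) * φ (w j) = φ (w j) * φ (w i) + algebraMap R _ (h * c) := by
      rw [← map_mul, ← map_mul, ← AlgEquiv.commutes φ, ← map_add, ← hc]; congr 1
      simp only [w]; abel
    have e2 : w i * w j = w j * w i + algebraMap R _ (h * c) := by
      rw [← hc]; simp only [w]; abel
    simp only [mul_sub, sub_mul, mul_assoc]
    rw [e2, ← mul_assoc (φ (w i)), e1]
    have e3 := Algebra.commutes (h * c) a
    simp only [add_mul, mul_add, mul_assoc, e3]
    abel
  have hpow : ∀ j, δ j ^ p = 0 := by
    intro j
    have : Fact p.Prime := ⟨hp⟩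
    have : CharP (Module.End R (ReesWeyl p n R h)) p := by
      rw [CharP.charP_iff_prime_eq_zero hp, ← map_natCast (algebraMap R _), hpR, map_zero]
    have h1 : h • δ j = LinearMap.mulLeft R (φ (w j)) - LinearMap.mulRight R (w j) := by
      apply LinearMap.ext; intro a
      rw [LinearMap.smul_apply, hδ]; simp
    have h2 : (h • δ j) ^ p = 0 := by
      have hc : Commute (S := Module.End R (ReesWeyl p n R h)) (LinearMap.mulLeft R (φ (w j)))
        (LinearMap.mulRight R (w j)) := LinearMap.commute_mulLeft_right _ _
      rw [h1]
      refine (rees_sub_pow (B := Module.End R (ReesWeyl p n R h)) p _ _ hc.eq).trans ?_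
      rw [LinearMap.pow_mulLeft, LinearMap.pow_mulRight, ← map_pow]
      simp only [w, rees_wp]
      simp
    rw [smul_pow] at h2
    apply LinearMap.ext
    intro a
    have h3 : ∀ k (b : ReesWeyl p n R h), h ^ k • b = 0 → b = 0 := by
      intro k
      induction k with
      | zero => intro b hb; simpa using hb
      | succ k ih =>
        intro b hb
        rw [pow_succ, mul_smul] at hb
        exact rees_regular hp hpR hnz _ (ih _ hb)
    exact h3 p _ (LinearMap.congr_fun h2 a)
  let I : Submodule R (ReesWeyl p n R h) := LinearMap.ker ε.toLinearMap
  have hI : ∀ a, a ∈ I ↔ ε a = 0 := fun a => Iff.rfl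
  let L : List (Fin n ⊕ Fin n) := Finset.univ.toList
  let z : Fin n ⊕ Fin n → ReesWeyl p n R h := fun j => w j.swap
  have hdz : ∀ i j, d i (z j) = algebraMap R _ (if i = j then (reesSig i : R) else 0) := by
    intro i j
    apply inj
    rw [hd']
    simp only [z, w]
    rw [rees_comm, Algebra.smul_def, ← map_mul, mul_ite, mul_zero, mul_comm h]
  have lead := rees_leading p I (fun a b hb => by rw [hI] at hb ⊢; rw [map_mul, hb, mul_zero])
    d G δ (fun j a => by simp [δ]) (fun j a b => by
      apply inj
      rw [smul_add, ← smul_mul_assoc, ← mul_smul_comm, hd', hd', hd', sub_mul, mul_sub]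
      simp only [mul_assoc]; abel) z (fun j => (reesSig j : R)) (fun j => by simp [hdz])
    (fun i j hij => by simp [hdz, hij]) (fun j => hε _) L (Finset.nodup_toList _)
  refine ⟨reesT p δ L (reesV p z L), ?_, ?_⟩
  · apply rees_unit hp hpR ε hε
    have h1 : ∀ a ∈ reesF I 1, ε a = 0 := by
      intro a ha
      rw [reesF] at ha
      induction ha using Submodule.mul_induction_on' with
      | mem_mul_mem m hm n hn => rw [map_mul, (hI m).1 hm, zero_mul]
      | add x hx y hy h1 h2 => rw [map_add, h1, h2, add_zero]
    have h2 := h1 _ lead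
    rw [map_sub, sub_eq_zero] at h2
    rw [h2, AlgHom.commutes]
    apply IsUnit.map
    have h3 : ∀ l : List (Fin n ⊕ Fin n), IsUnit
        (l.map fun j => (reesSig j : R) ^ (p - 1) * ((p - 1).factorial : R)).prod := by
      intro l
      induction l with
      | nil => simp
      | cons j l ih =>
        rw [List.map_cons, List.prod_cons]
        refine IsUnit.mul (IsUnit.mul (IsUnit.pow _ ?_) (rees_fact_unit hp hpR)) ih
        rcases j with j | j <;> simp [reesSig]
    exact h3 L
  · intro a
    induction a using rees_induct with
    | hc c => rw [AlgEquiv.commutes, Algebra.commutes]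
    | hw j =>
      have h1 := reesT_kill p hp.ne_zero δ hcomm hpow j L (by simp [L])
      have h2 := LinearMap.congr_fun h1 (reesV p z L)
      rw [Module.End.mul_apply, LinearMap.zero_apply] at h2
      have h3 := hδ j (reesT p δ L (reesV p z L))
      rw [h2, smul_zero] at h3
      exact (sub_eq_zero.mp h3.symm)
    | ha a b h1 h2 => rw [map_add, add_mul, mul_add, h1, h2]
    | hm a b h1 h2 => rw [map_mul, mul_assoc, h2, ← mul_assoc, h1, mul_assoc]

end

/-- over an `h`-separable, `h`-adically complete base `R` (with `p·R = 0`,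
`p` an odd prime), every `R`-algebra automorphism of `A(R)` which is the identity
modulo `h·A(R)` is conjugation by a unit of `A(R)`. -/
theorem automorphism_trivial_mod_h_is_inner_complete
    (p n : ℕ) (hp : p.Prime) (hodd : p ≠ 2) (hn : 1 ≤ n)
    (R : Type) [CommRing R] (hpR : (p : R) = 0) (h : R)
    [IsAdicComplete (Ideal.span {h}) R]
    (hnz : h ∈ nonZeroDivisors R)
    (hsep : ∀ a : R, (∃ b : R, a ^ p = h * b) → ∃ c : R, a ^ p = h ^ p * c)
    (φ : ReesWeyl p n R h ≃ₐ[R] ReesWeyl p n R h)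
    (hφ : ∀ a : ReesWeyl p n R h, ∃ c : ReesWeyl p n R h,
      φ a - a = algebraMap R (ReesWeyl p n R h) h * c) :
    ∃ u : (ReesWeyl p n R h)ˣ, ∀ m : ReesWeyl p n R h,
      φ m = (u : ReesWeyl p n R h) * m * ((u⁻¹ : (ReesWeyl p n R h)ˣ) : ReesWeyl p n R h) := by
  obtain ⟨u, ⟨u, rfl⟩, hu⟩ := rees_main hp hpR hnz φ (fun a => by
    obtain ⟨c, hc⟩ := hφ a
    exact ⟨c, by rw [hc, Algebra.smul_def]⟩)
  exact ⟨u, fun m => by rw [← hu, mul_assoc, Units.mul_inv, mul_one]⟩
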